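/- Let Ω ⊆ ℝ^N be Lebesgue measurable of finite measure and r < -N. Then the upper spherical Minkowski content at the north pole relative to Ψ(Ω) satisfies the lower bound M̄_S^r(N, Ψ(Ω)) ≥ (2^r / φ^{2N})(1 - φ^{N+r}) M̄^r(∞,Ω) for every φ > 1; optimizing over φ yields M̄_S^r(N, Ψ(Ω)) ≥ -((N+r)/(N-r)) (2N/(N-r))^{-(N+r)/(N-r)} 2^r M̄^r(∞,Ω). -/

import Mathlib

open MeasureTheory Filter Set
open scoped ENNReal NNReal Topology

noncomputable section

/-- The `[a,b)`-shell centered at the origin in `ℝ^N`. -/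
def shell (N : ℕ) (a b : ℝ) : Set (EuclideanSpace ℝ (Fin N)) :=
  {x | a ≤ ‖x‖ ∧ ‖x‖ < b}

/-- The complement of the open ball `B_t(0)` in `ℝ^N`. -/
def farBall (N : ℕ) (t : ℝ) : Set (EuclideanSpace ℝ (Fin N)) :=
  {x | t ≤ ‖x‖}

/-- Upper φ-shell Minkowski content of `Ω` at infinity. -/
def upperShellContent (N : ℕ) (Ω : Set (EuclideanSpace ℝ (Fin N))) (φ r : ℝ) : ℝ≥0∞ :=
  Filter.limsup (fun t : ℝ =>
    volume (shell N t (φ * t) ∩ Ω) / ENNReal.ofReal (t ^ ((N : ℝ) + r))) Filter.atTop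

/-- Lower φ-shell Minkowski content of `Ω` at infinity. -/
def lowerShellContent (N : ℕ) (Ω : Set (EuclideanSpace ℝ (Fin N))) (φ r : ℝ) : ℝ≥0∞ :=
  Filter.liminf (fun t : ℝ =>
    volume (shell N t (φ * t) ∩ Ω) / ENNReal.ofReal (t ^ ((N : ℝ) + r))) Filter.atTop

/-- Upper Minkowski content of `Ω` at infinity. -/
def upperContent (N : ℕ) (Ω : Set (EuclideanSpace ℝ (Fin N))) (r : ℝ) : ℝ≥0∞ :=
  Filter.limsup (fun t : ℝ =>
    volume (farBall N t ∩ Ω) / ENNReal.ofReal (t ^ ((N : ℝ) + r))) Filter.atTop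

/-- Lower Minkowski content of `Ω` at infinity. -/
def lowerContent (N : ℕ) (Ω : Set (EuclideanSpace ℝ (Fin N))) (r : ℝ) : ℝ≥0∞ :=
  Filter.liminf (fun t : ℝ =>
    volume (farBall N t ∩ Ω) / ENNReal.ofReal (t ^ ((N : ℝ) + r))) Filter.atTop

/-- Upper φ-shell Minkowski dimension of `Ω` at infinity, as an extended real. -/
def upperShellDim (N : ℕ) (Ω : Set (EuclideanSpace ℝ (Fin N))) (φ : ℝ) : EReal :=
  sInf ((fun r : ℝ => (r : EReal)) '' {r : ℝ | upperShellContent N Ω φ r = 0})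

/-- Lower φ-shell Minkowski dimension of `Ω` at infinity, as an extended real. -/
def lowerShellDim (N : ℕ) (Ω : Set (EuclideanSpace ℝ (Fin N))) (φ : ℝ) : EReal :=
  sInf ((fun r : ℝ => (r : EReal)) '' {r : ℝ | lowerShellContent N Ω φ r = 0})

/-- The spherical volume of the image of a set `E ⊆ ℝ^N` under stereographic projection,
expressed by the change-of-variables formula `|Ψ(E)|_S = ∫_E 2^N/(1+|x|²)^N dx`. -/
def sphericalVolume (N : ℕ) (E : Set (EuclideanSpace ℝ (Fin N))) : ℝ≥0∞ :=
  ∫⁻ x in E, ENNReal.ofReal ((2 : ℝ) ^ (N : ℝ) / (1 + ‖x‖ ^ 2) ^ (N : ℝ))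

/-- Upper spherical Minkowski content of the north pole relative to `Ψ(Ω)`, using the identity
`Ψ⁻¹({N}_{δ,S} ∩ Ψ(Ω)) = B_{cot(δ/2)}(0)ᶜ ∩ Ω`. -/
def upperSphericalContent (N : ℕ) (Ω : Set (EuclideanSpace ℝ (Fin N))) (r : ℝ) : ℝ≥0∞ :=
  Filter.limsup (fun δ : ℝ =>
    sphericalVolume N (farBall N (Real.cot (δ / 2)) ∩ Ω) / ENNReal.ofReal (δ ^ ((N : ℝ) - r)))
    (nhdsWithin 0 (Ioi 0))

/-- Lower spherical Minkowski content of the north pole relative to `Ψ(Ω)`. -/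
def lowerSphericalContent (N : ℕ) (Ω : Set (EuclideanSpace ℝ (Fin N))) (r : ℝ) : ℝ≥0∞ :=
  Filter.liminf (fun δ : ℝ =>
    sphericalVolume N (farBall N (Real.cot (δ / 2)) ∩ Ω) / ENNReal.ofReal (δ ^ ((N : ℝ) - r)))
    (nhdsWithin 0 (Ioi 0))

lemma measurableSet_farBall (N : ℕ) (t : ℝ) : MeasurableSet (farBall N t) :=
  measurableSet_le measurable_const measurable_norm

/-- The radial density of the spherical volume bounds Lebesgue measure on the complement of a ball,
up to a power weight. -/
lemma volume_farBall_le_lintegral (N : ℕ) {Ω : Set (EuclideanSpace ℝ (Fin N))}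
    (hΩ : MeasurableSet Ω) {t : ℝ} (ht : 0 < t) :
    volume (farBall N t ∩ Ω) ≤
      ENNReal.ofReal (((1 + (t ^ 2)⁻¹) / 2) ^ N) *
        ∫⁻ x in farBall N t ∩ Ω, ENNReal.ofReal ((2 : ℝ) ^ (N : ℝ) / (1 + ‖x‖ ^ 2) ^ (N : ℝ)) *
          ENNReal.ofReal (‖x‖ ^ (2 * N)) := by
  have hE : MeasurableSet (farBall N t ∩ Ω) := (measurableSet_farBall N t).inter hΩ
  rw [← lintegral_const_mul' _ _ ENNReal.ofReal_ne_top, ← setLIntegral_one]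
  refine setLIntegral_mono' hE fun x hx => ?_
  have hx1 : t ≤ ‖x‖ := hx.1
  have hpos : 0 < 1 + ‖x‖ ^ 2 := by positivity
  rw [← ENNReal.ofReal_mul (by positivity), ← ENNReal.ofReal_mul (by positivity),
    ← ENNReal.ofReal_one]
  apply ENNReal.ofReal_le_ofReal
  rw [Real.rpow_natCast, Real.rpow_natCast, pow_mul, ← div_pow, ← mul_pow, ← mul_pow]
  apply one_le_pow₀
  have hsq : 1 ≤ (t ^ 2)⁻¹ * ‖x‖ ^ 2 := by
    rw [inv_mul_eq_div, one_le_div (by positivity)]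
    gcongr
  have : (1 + (t ^ 2)⁻¹) / 2 * (2 / (1 + ‖x‖ ^ 2) * ‖x‖ ^ 2) =
      (‖x‖ ^ 2 + (t ^ 2)⁻¹ * ‖x‖ ^ 2) / (1 + ‖x‖ ^ 2) := by
    field_simp
  rw [this, one_le_div hpos]
  linarith

/-- The weight `max u t ^ (r - N)` integrates explicitly against `d(u ^ (2N))` on `(0, ∞)`. -/
lemma lintegral_max_rpow_mul {N : ℕ} (hN : N ≠ 0) {r : ℝ} (hr : r < -(N : ℝ)) {t : ℝ}
    (ht : 0 < t) :
    ∫⁻ u in Ioi (0 : ℝ), ENNReal.ofReal (max u t ^ (r - (N : ℝ))) *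
        ENNReal.ofReal ((2 * N : ℕ) * u ^ (2 * N - 1)) =
      ENNReal.ofReal (((N : ℝ) - r) / -((N : ℝ) + r) * t ^ ((N : ℝ) + r)) := by
  have hs : 0 < -((N : ℝ) + r) := by linarith
  rw [← Ioc_union_Ioi_eq_Ioi ht.le,
    lintegral_union measurableSet_Ioi (Ioc_disjoint_Ioi le_rfl)]
  have near : ∫⁻ u in Ioc (0 : ℝ) t, ENNReal.ofReal (max u t ^ (r - (N : ℝ))) *
        ENNReal.ofReal ((2 * N : ℕ) * u ^ (2 * N - 1)) =
      ENNReal.ofReal (t ^ ((N : ℝ) + r)) := by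
    have hint : IntervalIntegrable (fun u : ℝ => ((2 * N : ℕ) : ℝ) * u ^ (2 * N - 1))
        volume 0 t := by
      apply Continuous.intervalIntegrable
      fun_prop
    have hval : ∫ u in (0 : ℝ)..t, ((2 * N : ℕ) : ℝ) * u ^ (2 * N - 1) = t ^ (2 * N) := by
      rw [intervalIntegral.integral_eq_sub_of_hasDerivAt
        (fun u _ => hasDerivAt_pow (2 * N) u) hint]
      simp [hN]
    calc _ = ∫⁻ u in Ioc (0 : ℝ) t, ENNReal.ofReal (t ^ (r - (N : ℝ))) *
          ENNReal.ofReal ((2 * N : ℕ) * u ^ (2 * N - 1)) :=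
          setLIntegral_congr_fun measurableSet_Ioc fun u hu => by
            simp only [max_eq_right hu.2]
      _ = ENNReal.ofReal (t ^ (r - (N : ℝ))) * ENNReal.ofReal (t ^ (2 * N)) := by
          rw [lintegral_const_mul' _ _ ENNReal.ofReal_ne_top,
            ← ofReal_integral_eq_lintegral_ofReal hint.1, ← intervalIntegral.integral_of_le ht.le,
            hval]
          filter_upwards [ae_restrict_mem measurableSet_Ioc] with u hu
          have := hu.1.le
          simp only [Pi.zero_apply]
          positivity
      _ = _ := by
          rw [← ENNReal.ofReal_mul (by positivity), ← Real.rpow_natCast, ← Real.rpow_add ht]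
          congr 2
          push_cast
          ring
  have far : ∫⁻ u in Ioi t, ENNReal.ofReal (max u t ^ (r - (N : ℝ))) *
        ENNReal.ofReal ((2 * N : ℕ) * u ^ (2 * N - 1)) =
      ENNReal.ofReal (2 * N / -((N : ℝ) + r) * t ^ ((N : ℝ) + r)) := by
    have hlt : (N : ℝ) + r - 1 < -1 := by linarith
    calc _ = ∫⁻ u in Ioi t, ENNReal.ofReal (2 * N * u ^ ((N : ℝ) + r - 1)) :=
          setLIntegral_congr_fun measurableSet_Ioi fun u (hu : t < u) => by
            have hu0 : 0 < u := ht.trans hu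
            simp only [max_eq_left hu.le]
            rw [← ENNReal.ofReal_mul (by positivity), ← Real.rpow_natCast, mul_left_comm,
              ← Real.rpow_add hu0, Nat.cast_sub (by omega)]
            push_cast
            ring_nf
      _ = ENNReal.ofReal (∫ u in Ioi t, 2 * N * u ^ ((N : ℝ) + r - 1)) := by
          rw [ofReal_integral_eq_lintegral_ofReal
            ((integrableOn_Ioi_rpow_of_lt hlt ht).const_mul _)]
          filter_upwards [ae_restrict_mem measurableSet_Ioi] with u hu
          have : 0 < u := ht.trans hu
          simp only [Pi.zero_apply]
          positivity
      _ = _ := by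
          rw [integral_const_mul, integral_Ioi_rpow_of_lt hlt ht, sub_add_cancel, neg_div, div_neg]
          ring_nf
  rw [near, far, ← ENNReal.ofReal_add (by positivity) (by positivity)]
  congr 1
  have hne : (N : ℝ) + r ≠ 0 := by linarith
  field_simp
  ring

/-- A power bound on the tails of the spherical volume yields a power bound on the tails of the
Lebesgue measure. -/
lemma volume_farBall_le_of_sphericalVolume_le {N : ℕ} (hN : N ≠ 0)
    {Ω : Set (EuclideanSpace ℝ (Fin N))} (hΩ : MeasurableSet Ω) {r : ℝ} (hr : r < -(N : ℝ))
    {t K : ℝ} (ht : 0 < t) (hK : 0 ≤ K)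
    (h : ∀ u, t ≤ u →
      sphericalVolume N (farBall N u ∩ Ω) ≤ ENNReal.ofReal (K * u ^ (r - (N : ℝ)))) :
    volume (farBall N t ∩ Ω) ≤ ENNReal.ofReal (((1 + (t ^ 2)⁻¹) / 2) ^ N *
      (K * (((N : ℝ) - r) / -((N : ℝ) + r) * t ^ ((N : ℝ) + r)))) := by
  set ρ : EuclideanSpace ℝ (Fin N) → ℝ≥0∞ :=
    fun x => ENNReal.ofReal ((2 : ℝ) ^ (N : ℝ) / (1 + ‖x‖ ^ 2) ^ (N : ℝ))
  have hρm : Measurable ρ := by fun_prop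
  set ν := (volume.restrict (farBall N t ∩ Ω)).withDensity ρ with hν
  have tail : ∀ u : ℝ, ν {x | u ≤ ‖x‖} ≤
      ENNReal.ofReal K * ENNReal.ofReal (max u t ^ (r - (N : ℝ))) := by
    intro u
    rw [← ENNReal.ofReal_mul hK]
    refine le_trans (le_of_eq ?_) (h (max u t) (le_max_right _ _))
    change ν (farBall N u) = _
    have hset : farBall N u ∩ (farBall N t ∩ Ω) =
        farBall N (max u t) ∩ Ω := by
      ext x
      simp [farBall, and_assoc]
    rw [hν, withDensity_apply _ (measurableSet_farBall N u),
      Measure.restrict_restrict (measurableSet_farBall N u), hset]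
    rfl
  have layer : ∫⁻ x, ENNReal.ofReal (‖x‖ ^ (2 * N)) ∂ν =
      ∫⁻ u in Ioi (0 : ℝ), ν {x | u ≤ ‖x‖} *
        ENNReal.ofReal ((2 * N : ℕ) * u ^ (2 * N - 1)) := by
    have hint : ∀ u : ℝ, IntervalIntegrable
        (fun u : ℝ => ((2 * N : ℕ) : ℝ) * u ^ (2 * N - 1)) volume 0 u := fun u => by
      apply Continuous.intervalIntegrable
      fun_prop
    rw [← lintegral_comp_eq_lintegral_meas_le_mul ν (ae_of_all _ fun x => norm_nonneg x)
      measurable_norm.aemeasurable (fun u _ => hint u)]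
    · refine lintegral_congr fun x => ?_
      rw [intervalIntegral.integral_eq_sub_of_hasDerivAt
        (fun u _ => hasDerivAt_pow (2 * N) u) (hint _)]
      simp [hN]
    · filter_upwards [ae_restrict_mem measurableSet_Ioi] with u hu
      have : (0 : ℝ) < u := hu
      positivity
  calc volume (farBall N t ∩ Ω)
      ≤ ENNReal.ofReal (((1 + (t ^ 2)⁻¹) / 2) ^ N) *
          ∫⁻ x, ENNReal.ofReal (‖x‖ ^ (2 * N)) ∂ν := by
        rw [hν, lintegral_withDensity_eq_lintegral_mul _ hρm (by fun_prop)]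
        exact volume_farBall_le_lintegral N hΩ ht
    _ ≤ ENNReal.ofReal (((1 + (t ^ 2)⁻¹) / 2) ^ N) *
          ∫⁻ u in Ioi (0 : ℝ), ENNReal.ofReal K * (ENNReal.ofReal (max u t ^ (r - (N : ℝ))) *
            ENNReal.ofReal ((2 * N : ℕ) * u ^ (2 * N - 1))) := by
        rw [layer]
        simp only [← mul_assoc]
        gcongr with u
        exact tail u
    _ = _ := by
        rw [lintegral_const_mul' _ _ ENNReal.ofReal_ne_top, lintegral_max_rpow_mul hN hr ht,
          ← ENNReal.ofReal_mul hK, ← ENNReal.ofReal_mul (by positivity)]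

lemma Real.cot_arctan_inv {u : ℝ} : Real.cot (Real.arctan u⁻¹) = u := by
  rw [← Real.tan_inv_eq_cot, Real.tan_arctan, inv_inv]

lemma Real.arctan_le_self_of_pos {x : ℝ} (hx : 0 < x) : Real.arctan x ≤ x := by
  simpa using (Real.lt_tan (Real.arctan_pos.2 hx) (Real.arctan_lt_pi_div_two x)).le

/-- Any strict upper bound for the spherical content controls the tails of the spherical volume. -/
lemma eventually_sphericalVolume_le {N : ℕ} {Ω : Set (EuclideanSpace ℝ (Fin N))} {r d : ℝ}
    (hr : r < -(N : ℝ)) (hd : 0 ≤ d) (h : upperSphericalContent N Ω r < ENNReal.ofReal d) :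
    ∀ᶠ u : ℝ in atTop, sphericalVolume N (farBall N u ∩ Ω) ≤
      ENNReal.ofReal (d * 2 ^ ((N : ℝ) - r) * u ^ (r - (N : ℝ))) := by
  have hlim : Tendsto (fun u : ℝ => 2 * Real.arctan u⁻¹) atTop (𝓝[>] 0) := by
    refine tendsto_nhdsWithin_iff.2 ⟨?_, ?_⟩
    · have := ((Real.continuous_arctan.tendsto 0).comp tendsto_inv_atTop_zero).const_mul (2 : ℝ)
      simpa using this
    · filter_upwards [eventually_gt_atTop 0] with u hu
      have := Real.arctan_pos.2 (inv_pos.2 hu)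
      exact mul_pos two_pos this
  filter_upwards [hlim.eventually (eventually_lt_of_limsup_lt h), eventually_gt_atTop 0]
    with u hu hu0
  have hN : (0 : ℝ) ≤ N := N.cast_nonneg
  have hpos : 0 < Real.arctan u⁻¹ := Real.arctan_pos.2 (inv_pos.2 hu0)
  rw [mul_div_cancel_left₀ _ two_ne_zero, Real.cot_arctan_inv] at hu
  have hden : 0 < (2 * Real.arctan u⁻¹) ^ ((N : ℝ) - r) := by positivity
  refine ((ENNReal.div_le_iff (by simpa using hden) ENNReal.ofReal_ne_top).1 hu.le).trans ?_
  rw [← ENNReal.ofReal_mul hd]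
  apply ENNReal.ofReal_le_ofReal
  rw [mul_assoc]
  gcongr
  calc (2 * Real.arctan u⁻¹) ^ ((N : ℝ) - r) ≤ (2 * u⁻¹) ^ ((N : ℝ) - r) := by
        apply Real.rpow_le_rpow (by positivity) _ (by linarith)
        gcongr
        exact Real.arctan_le_self_of_pos (inv_pos.2 hu0)
    _ = _ := by
        rw [Real.mul_rpow two_pos.le (by positivity), Real.inv_rpow hu0.le, ← Real.rpow_neg hu0.le,
          neg_sub]

lemma upperContent_zero_dim (Ω : Set (EuclideanSpace ℝ (Fin 0))) (r : ℝ) :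
    upperContent 0 Ω r = 0 := by
  refine le_antisymm (limsup_le_of_le (by isBoundedDefault) ?_) bot_le
  filter_upwards [eventually_gt_atTop 0] with t ht
  have : farBall 0 t = ∅ := by
    ext x
    simp [farBall, Subsingleton.elim x 0, ht]
  simp [this]

/-- The upper content at infinity is controlled by the upper spherical content, with the constant
obtained by integrating the spherical tails against the inverse density. -/
lemma upperContent_le_of_upperSphericalContent_lt {N : ℕ} (hN : N ≠ 0)
    {Ω : Set (EuclideanSpace ℝ (Fin N))} (hΩ : MeasurableSet Ω) {r d : ℝ} (hr : r < -(N : ℝ))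
    (hd : 0 ≤ d) (h : upperSphericalContent N Ω r < ENNReal.ofReal d) :
    upperContent N Ω r ≤
      ENNReal.ofReal (d * 2 ^ (-r) * (((N : ℝ) - r) / -((N : ℝ) + r))) := by
  obtain ⟨T, hT⟩ := eventually_atTop.1 (eventually_sphericalVolume_le hr hd h)
  have hlim : Tendsto (fun t : ℝ => ENNReal.ofReal ((1 + (t ^ 2)⁻¹) ^ N *
      (d * 2 ^ (-r) * (((N : ℝ) - r) / -((N : ℝ) + r))))) atTop
      (𝓝 (ENNReal.ofReal (d * 2 ^ (-r) * (((N : ℝ) - r) / -((N : ℝ) + r))))) := by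
    refine ENNReal.tendsto_ofReal ?_
    have h0 : Tendsto (fun t : ℝ => (t ^ 2)⁻¹) atTop (𝓝 0) :=
      tendsto_inv_atTop_zero.comp (tendsto_pow_atTop two_ne_zero)
    simpa using ((h0.const_add 1).pow N).mul_const
      (d * 2 ^ (-r) * (((N : ℝ) - r) / -((N : ℝ) + r)))
  rw [← hlim.limsup_eq]
  refine limsup_le_limsup ?_
  filter_upwards [eventually_gt_atTop 0, eventually_ge_atTop T] with t ht htT
  have hden : 0 < t ^ ((N : ℝ) + r) := by positivity
  rw [ENNReal.div_le_iff (by simpa using hden) ENNReal.ofReal_ne_top,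
    ← ENNReal.ofReal_mul' hden.le]
  refine (volume_farBall_le_of_sphericalVolume_le hN hΩ hr ht (by positivity)
    fun u hu => hT u (htT.trans hu)).trans (le_of_eq ?_)
  congr 1
  rw [sub_eq_add_neg (N : ℝ) r, Real.rpow_add two_pos, Real.rpow_natCast, div_pow]
  field_simp

/-- The sharp comparison between the upper content at infinity and the upper spherical content. -/
lemma ofReal_mul_upperContent_le_upperSphericalContent (N : ℕ)
    {Ω : Set (EuclideanSpace ℝ (Fin N))} (hΩ : MeasurableSet Ω) {r : ℝ} (hr : r < -(N : ℝ)) :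
    ENNReal.ofReal (-(((N : ℝ) + r) / ((N : ℝ) - r)) * 2 ^ r) * upperContent N Ω r ≤
      upperSphericalContent N Ω r := by
  rcases eq_or_ne N 0 with rfl | hN
  · simp [upperContent_zero_dim]
  have hN0 : (0 : ℝ) ≤ N := N.cast_nonneg
  have hs : 0 < -((N : ℝ) + r) := by linarith
  have hq : 0 < (N : ℝ) - r := by linarith
  refine le_of_forall_gt_imp_ge_of_dense fun D hD => ?_
  rcases eq_or_ne D ⊤ with rfl | hDtop
  · exact le_top
  rw [← ENNReal.ofReal_toReal hDtop] at hD ⊢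
  have hc : 0 ≤ -(((N : ℝ) + r) / ((N : ℝ) - r)) * 2 ^ r := by
    rw [← neg_div]
    positivity
  calc _ ≤ ENNReal.ofReal (-(((N : ℝ) + r) / ((N : ℝ) - r)) * 2 ^ r) *
        ENNReal.ofReal (D.toReal * 2 ^ (-r) * (((N : ℝ) - r) / -((N : ℝ) + r))) := by
        gcongr
        exact upperContent_le_of_upperSphericalContent_lt hN hΩ hr ENNReal.toReal_nonneg hD
    _ = _ := by
        rw [← ENNReal.ofReal_mul hc]
        congr 1
        rw [Real.rpow_neg two_pos.le]
        have : (N : ℝ) + r ≠ 0 := by linarith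
        have : (2 : ℝ) ^ r ≠ 0 := by positivity
        field_simp

/-- Bernoulli's inequality bounds the constant obtained from a single ratio `φ`. -/
lemma one_sub_rpow_div_le {n s φ : ℝ} (hn : 0 ≤ n) (hs : 0 < s) (hφ : 1 < φ) :
    (1 - φ ^ (-s)) / φ ^ n ≤ s / (n + s) := by
  have hφ0 : 0 < φ := by linarith
  have hb := one_add_mul_self_le_rpow_one_add (s := φ ^ s - 1) (p := (n + s) / s)
    (by have : 0 < φ ^ s := by positivity
        linarith)
    (by rw [one_le_div hs]; linarith)
  rw [add_sub_cancel, ← Real.rpow_mul hφ0.le, mul_div_cancel₀ _ hs.ne', Real.rpow_add hφ0] at hb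
  have hps : 0 < φ ^ s := by positivity
  have hpn : 0 < φ ^ n := by positivity
  rw [Real.rpow_neg hφ0.le, div_le_div_iff₀ hpn (by linarith)]
  have hb' : (n + s) * (φ ^ s - 1) ≤ s * (φ ^ n * φ ^ s) := by
    have := mul_le_mul_of_nonneg_left hb hs.le
    have e : s * (1 + (n + s) / s * (φ ^ s - 1)) = s + (n + s) * (φ ^ s - 1) := by
      field_simp
    linarith
  have e : (1 - (φ ^ s)⁻¹) * (n + s) = (n + s) * (φ ^ s - 1) / φ ^ s := by
    field_simp
  rw [e, div_le_iff₀ hps]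
  linarith

theorem spherical_content_lower_bounds
    (N : ℕ) (Ω : Set (EuclideanSpace ℝ (Fin N))) (hΩ : MeasurableSet Ω)
    (hfin : volume Ω < ⊤) (r : ℝ) (hr : r < -(N : ℝ)) :
    (∀ φ : ℝ, 1 < φ →
      ENNReal.ofReal ((2 : ℝ) ^ r / φ ^ (2 * (N : ℝ)) * (1 - φ ^ ((N : ℝ) + r))) *
        upperContent N Ω r ≤ upperSphericalContent N Ω r) ∧
    ENNReal.ofReal
        (-(((N : ℝ) + r) / ((N : ℝ) - r)) *
          (2 * (N : ℝ) / ((N : ℝ) - r)) ^ (-(((N : ℝ) + r) / ((N : ℝ) - r))) * (2 : ℝ) ^ r) *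
      upperContent N Ω r ≤ upperSphericalContent N Ω r := by
  have hN0 : (0 : ℝ) ≤ N := N.cast_nonneg
  have hs : 0 < -((N : ℝ) + r) := by linarith
  have hq : 0 < (N : ℝ) - r := by linarith
  have sharp := ofReal_mul_upperContent_le_upperSphericalContent N hΩ hr
  refine ⟨fun φ hφ => le_trans ?_ sharp, le_trans ?_ sharp⟩
  · gcongr ENNReal.ofReal ?_ * _
    have hb := one_sub_rpow_div_le (n := 2 * N) (by positivity) hs hφ
    rw [neg_neg, show 2 * (N : ℝ) + -((N : ℝ) + r) = N - r by ring, neg_div] at hb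
    calc _ = (1 - φ ^ ((N : ℝ) + r)) / φ ^ (2 * (N : ℝ)) * 2 ^ r := by ring
      _ ≤ _ := by gcongr
  · gcongr ENNReal.ofReal (?_ * _) * _
    rw [← neg_div]
    refine mul_le_of_le_one_right (by positivity) (Real.rpow_le_one (by positivity) ?_ ?_)
    · rw [div_le_one hq]
      linarith
    · positivity
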